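/- Let A be a finite nonempty set, V : A → ℝ, and j ∈ A. Let γ be the Gumbel probability measure on ℝ and let ν be the product measure on A → ℝ whose coordinates are independent copies of γ. Then ν({e : A → ℝ : for all k ∈ A, V(j) + e(j) ≥ V(k) + e(k)}) = exp(V(j)) / ∑_{k∈A} exp(V(k)). -/

import Mathlib

open MeasureTheory Real

/-!
Conditionally on `e j = x`, alternative `j` wins exactly when `e k ≤ x + V j - V k` for every
`k ≠ j`. By independence this has probability
`∏ k ≠ j, exp (-exp (-(x + V j - V k))) = exp (-c * exp (-x))` with `c = ∑ k ≠ j, exp (V k - V j)`.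
Against the Gumbel density this integrates to `∫ exp (-x - (1 + c) * exp (-x)) dx = 1 / (1 + c)`,
since the integrand has the primitive `exp (-(1 + c) * exp (-x)) / (1 + c)`.
-/

open Filter Set Topology

section ImproperIntegral

variable {g g' : ℝ → ℝ} {l m : ℝ}

theorem integrable_of_hasDerivAt_of_nonneg (hderiv : ∀ x, HasDerivAt g (g' x) x)
    (hnonneg : ∀ x, 0 ≤ g' x) (hbot : Tendsto g atBot (𝓝 m)) (htop : Tendsto g atTop (𝓝 l)) :
    Integrable g' := by
  have hright : IntegrableOn g' (Ioi 0) :=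
    integrableOn_Ioi_deriv_of_nonneg' (fun x _ => hderiv x) (fun x _ => hnonneg x) htop
  have hreflect : IntegrableOn (fun x => g' (-x)) (Ici 0) := by
    rw [integrableOn_Ici_iff_integrableOn_Ioi]
    refine integrableOn_Ioi_deriv_of_nonneg' (g := fun x => -g (-x)) (fun x _ => ?_)
      (fun x _ => hnonneg (-x)) (hbot.comp tendsto_neg_atTop_atBot).neg
    simpa using ((hderiv (-x)).scomp x (hasDerivAt_neg x)).fun_neg
  have hleft : IntegrableOn g' (Iic 0) := by
    rw [← (Measure.measurePreserving_neg volume).integrableOn_comp_preimage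
      (MeasurableEquiv.neg ℝ).measurableEmbedding]
    simpa [Function.comp_def] using hreflect
  rw [← integrableOn_univ, ← Iic_union_Ioi (a := (0 : ℝ))]
  exact hleft.union hright

theorem lintegral_ofReal_of_hasDerivAt_of_nonneg (hderiv : ∀ x, HasDerivAt g (g' x) x)
    (hnonneg : ∀ x, 0 ≤ g' x) (hbot : Tendsto g atBot (𝓝 m)) (htop : Tendsto g atTop (𝓝 l)) :
    ∫⁻ x, ENNReal.ofReal (g' x) = ENNReal.ofReal (l - m) := by
  have hint := integrable_of_hasDerivAt_of_nonneg hderiv hnonneg hbot htop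
  rw [← ofReal_integral_eq_lintegral_ofReal hint (.of_forall hnonneg),
    integral_of_hasDerivAt_of_tendsto hderiv hint hbot htop]

theorem setLIntegral_Iic_ofReal_of_hasDerivAt_of_nonneg (hderiv : ∀ x, HasDerivAt g (g' x) x)
    (hnonneg : ∀ x, 0 ≤ g' x) (hbot : Tendsto g atBot (𝓝 m)) (htop : Tendsto g atTop (𝓝 l))
    (a : ℝ) : ∫⁻ x in Iic a, ENNReal.ofReal (g' x) = ENNReal.ofReal (g a - m) := by
  have hint : IntegrableOn g' (Iic a) :=
    (integrable_of_hasDerivAt_of_nonneg hderiv hnonneg hbot htop).integrableOn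
  rw [← ofReal_integral_eq_lintegral_ofReal hint (.of_forall hnonneg),
    integral_Iic_of_hasDerivAt_of_tendsto' (fun x _ => hderiv x) hint hbot]

end ImproperIntegral

section ProductMeasure

variable {ι : Type*} [Fintype ι] [DecidableEq ι] {X : ι → Type*} [∀ k, MeasurableSpace (X k)]
  (μ : ∀ k, Measure (X k)) [∀ k, SigmaFinite (μ k)]

theorem measurePreserving_piSplitAt (j : ι) :
    MeasurePreserving (Equiv.piSplitAt j X) (Measure.pi μ)
      ((μ j).prod (Measure.pi fun k : {k // k ≠ j} => μ k)) := by
  have hsplit : MeasurePreserving (MeasurableEquiv.piEquivPiSubtypeProd X (· = j)) (Measure.pi μ)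
      ((Measure.pi fun k : {k // k = j} => μ k).prod
        (Measure.pi fun k : {k // k ≠ j} => μ k)) := by
    -- The two sides differ only in the `Fintype` instances on the subtypes.
    convert measurePreserving_piEquivPiSubtypeProd μ (· = j)
  exact ((measurePreserving_piUnique fun k : {k // k = j} => μ k).prod (.id _)).comp hsplit

theorem measure_pi_setOf_forall_ne_mem (j : ι) {s : ∀ k, X j → Set (X k)}
    (hs : ∀ k ≠ j, MeasurableSet {p : X j × X k | p.2 ∈ s k p.1}) :
    Measure.pi μ {e | ∀ k ≠ j, e k ∈ s k (e j)} =
      ∫⁻ x, ∏ k : {k // k ≠ j}, μ k (s k x) ∂μ j := by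
  let S : Set (X j × ∀ k : {k // k ≠ j}, X k) := {p | ∀ k : {k // k ≠ j}, p.2 k ∈ s k p.1}
  have hS : MeasurableSet S := by
    have hS_eq : S = ⋂ k : {k // k ≠ j},
        (fun p : X j × (∀ k : {k // k ≠ j}, X k) => (p.1, p.2 k)) ⁻¹'
          {p | p.2 ∈ s k p.1} := by
      ext; simp [S]
    rw [hS_eq]
    exact .iInter fun k => (hs k k.2).preimage (by fun_prop)
  have hpreimage : {e | ∀ k ≠ j, e k ∈ s k (e j)} = Equiv.piSplitAt j X ⁻¹' S := by
    ext; simp [S, Equiv.piSplitAt]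
  have hsection (x : X j) : Prod.mk x ⁻¹' S = univ.pi fun k : {k // k ≠ j} => s k x := by
    ext; simp [S]
  rw [hpreimage, (measurePreserving_piSplitAt μ j).measure_preimage hS.nullMeasurableSet,
    Measure.prod_apply hS]
  simp only [hsection, Measure.pi_pi]

end ProductMeasure

section GumbelIntegral

variable {c : ℝ}

theorem hasDerivAt_exp_neg_mul_exp_neg_div (hc : c ≠ 0) (x : ℝ) :
    HasDerivAt (fun x => exp (-(c * exp (-x))) / c) (exp (-x - c * exp (-x))) x := by
  refine ((((hasDerivAt_neg x).exp.const_mul c).fun_neg.exp).div_const c).congr_deriv ?_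
  rw [sub_eq_add_neg, exp_add]
  field_simp

theorem tendsto_exp_neg_mul_exp_neg_div_atBot (hc : 0 < c) :
    Tendsto (fun x => exp (-(c * exp (-x))) / c) atBot (𝓝 0) := by
  have hinner : Tendsto (fun x => c * exp (-x)) atBot atTop :=
    (tendsto_exp_atTop.comp tendsto_neg_atBot_atTop).const_mul_atTop hc
  simpa using (tendsto_exp_neg_atTop_nhds_zero.comp hinner).div_const c

theorem tendsto_exp_neg_mul_exp_neg_div_atTop (c : ℝ) :
    Tendsto (fun x => exp (-(c * exp (-x))) / c) atTop (𝓝 (1 / c)) := by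
  simpa using (tendsto_exp_neg_atTop_nhds_zero.const_mul c).neg.rexp.div_const c

theorem lintegral_exp_neg_sub_mul_exp_neg (hc : 0 < c) :
    ∫⁻ x, ENNReal.ofReal (exp (-x - c * exp (-x))) = ENNReal.ofReal (1 / c) := by
  simpa only [sub_zero] using lintegral_ofReal_of_hasDerivAt_of_nonneg
    (hasDerivAt_exp_neg_mul_exp_neg_div hc.ne') (fun x => (exp_pos _).le)
    (tendsto_exp_neg_mul_exp_neg_div_atBot hc) (tendsto_exp_neg_mul_exp_neg_div_atTop c)

theorem setLIntegral_Iic_exp_neg_sub_mul_exp_neg (hc : 0 < c) (a : ℝ) :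
    ∫⁻ x in Iic a, ENNReal.ofReal (exp (-x - c * exp (-x))) =
      ENNReal.ofReal (exp (-(c * exp (-a))) / c) := by
  simpa only [sub_zero] using setLIntegral_Iic_ofReal_of_hasDerivAt_of_nonneg
    (hasDerivAt_exp_neg_mul_exp_neg_div hc.ne') (fun x => (exp_pos _).le)
    (tendsto_exp_neg_mul_exp_neg_div_atBot hc) (tendsto_exp_neg_mul_exp_neg_div_atTop c) a

end GumbelIntegral

/-- The standard Gumbel (type 1 extreme value) distribution, given by its Lebesgue density; it is
the law of each random shock. -/
noncomputable def gumbelMeasure : Measure ℝ :=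
  volume.withDensity fun x => ENNReal.ofReal (exp (-x - exp (-x)))

instance isProbabilityMeasure_gumbelMeasure : IsProbabilityMeasure gumbelMeasure where
  measure_univ := by
    rw [gumbelMeasure, withDensity_apply _ .univ, Measure.restrict_univ]
    simpa using lintegral_exp_neg_sub_mul_exp_neg one_pos

theorem gumbelMeasure_Iic (a : ℝ) :
    gumbelMeasure (Iic a) = ENNReal.ofReal (exp (-exp (-a))) := by
  rw [gumbelMeasure, withDensity_apply _ measurableSet_Iic]
  simpa using setLIntegral_Iic_exp_neg_sub_mul_exp_neg one_pos a

theorem prod_gumbelMeasure_Iic_add {ι : Type*} [Fintype ι] (t : ι → ℝ) (x : ℝ) :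
    ∏ k, gumbelMeasure (Iic (x + t k)) =
      ENNReal.ofReal (exp (-((∑ k, exp (-t k)) * exp (-x)))) := by
  simp only [gumbelMeasure_Iic]
  rw [← ENNReal.ofReal_prod_of_nonneg fun _ _ => (exp_pos _).le, ← exp_sum,
    Finset.sum_neg_distrib, Finset.sum_mul]
  simp only [neg_add_rev, exp_add]

theorem lintegral_exp_neg_mul_exp_neg_gumbelMeasure {c : ℝ} (hc : -1 < c) :
    ∫⁻ x, ENNReal.ofReal (exp (-(c * exp (-x)))) ∂gumbelMeasure =
      ENNReal.ofReal (1 / (1 + c)) := by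
  rw [gumbelMeasure, lintegral_withDensity_eq_lintegral_mul _ (by fun_prop) (by fun_prop),
    ← lintegral_exp_neg_sub_mul_exp_neg (by linarith)]
  refine lintegral_congr fun x => ?_
  rw [Pi.mul_apply, ← ENNReal.ofReal_mul (exp_pos _).le, ← exp_add]
  ring_nf

theorem measure_pi_gumbelMeasure_forall_ne_le_add {ι : Type*} [Fintype ι] [DecidableEq ι]
    (j : ι) (t : ι → ℝ) :
    Measure.pi (fun _ : ι => gumbelMeasure) {e | ∀ k ≠ j, e k ≤ e j + t k} =
      ENNReal.ofReal (1 / (1 + ∑ k : {k // k ≠ j}, exp (-t k))) := by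
  have hnonneg : 0 ≤ ∑ k : {k // k ≠ j}, exp (-t k) :=
    Finset.sum_nonneg fun _ _ => (exp_pos _).le
  calc Measure.pi (fun _ : ι => gumbelMeasure) {e | ∀ k ≠ j, e k ≤ e j + t k}
      = ∫⁻ x, ∏ k : {k // k ≠ j}, gumbelMeasure (Iic (x + t k)) ∂gumbelMeasure :=
        measure_pi_setOf_forall_ne_mem (fun _ => gumbelMeasure) j
          (s := fun k x => Iic (x + t k))
          fun k _ => measurableSet_le measurable_snd (measurable_fst.add_const (t k))
    _ = ∫⁻ x, ENNReal.ofReal (exp (-((∑ k : {k // k ≠ j}, exp (-t k)) * exp (-x))))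
          ∂gumbelMeasure := by
        simp only [prod_gumbelMeasure_Iic_add fun k : {k // k ≠ j} => t k]
    _ = ENNReal.ofReal (1 / (1 + ∑ k : {k // k ≠ j}, exp (-t k))) :=
        lintegral_exp_neg_mul_exp_neg_gumbelMeasure (by linarith)

theorem exp_div_sum_exp_eq {ι : Type*} [Fintype ι] [DecidableEq ι] (V : ι → ℝ) (j : ι) :
    exp (V j) / ∑ k, exp (V k) = 1 / (1 + ∑ k : {k // k ≠ j}, exp (-(V j - V k))) := by
  have hfactor : ∑ k, exp (V k) = exp (V j) * (1 + ∑ k : {k // k ≠ j}, exp (-(V j - V k))) := by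
    rw [Fintype.sum_eq_add_sum_subtype_ne _ j, mul_add, mul_one, Finset.mul_sum]
    simp only [← exp_add, neg_sub, add_sub_cancel]
  rw [hfactor, div_mul_eq_div_div, div_self (exp_ne_zero _)]

/-- The multinomial logit choice probability: if the shocks `e k`, `k ∈ A`, are i.i.d. Gumbel,
the probability that alternative `j` maximizes `V k + e k` is `exp (V j) / ∑ k, exp (V k)`. -/
theorem logit_choice_probability (A : Type*) [Fintype A] [Nonempty A]
    (V : A → ℝ) (j : A)
    (γ : Measure ℝ) [IsProbabilityMeasure γ]
    (hγ : γ = volume.withDensity fun x => ENNReal.ofReal (Real.exp (-x - Real.exp (-x)))) :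
    Measure.pi (fun _ : A => γ)
        {e : A → ℝ | ∀ k : A, V k + e k ≤ V j + e j}
      = ENNReal.ofReal (Real.exp (V j) / ∑ k : A, Real.exp (V k)) := by
  classical
  obtain rfl : γ = gumbelMeasure := hγ
  have hset : {e : A → ℝ | ∀ k, V k + e k ≤ V j + e j} =
      {e | ∀ k ≠ j, e k ≤ e j + (V j - V k)} := by
    ext e
    refine ⟨fun h k _ => by linarith [h k], fun h k => ?_⟩
    obtain rfl | hk := eq_or_ne k j
    · exact le_rfl
    · linarith [h k hk]
  rw [hset, measure_pi_gumbelMeasure_forall_ne_le_add, exp_div_sum_exp_eq]
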